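/- (Lemma 3.2) Under the assumptions of Lemma 3.1 (F real-analytic, 𝒯 = F ∘ · maps GX into GX, is an involution on GX, and has fixed point set exactly GY), write F₁ᵢ(X, Y, Z) = pᵢ Xᵢ + pᵢ' Zᵢ and F₃ᵢ(X, Y, Z) = qᵢ Xᵢ + qᵢ' Zᵢ. Then for every i ∈ {1, …, n} the following six equations hold: (1) pᵢ + pᵢ' = 1; (2) qᵢ + qᵢ' = 1; (3) pᵢ² + pᵢ'qᵢ = 1; (4) pᵢpᵢ' + pᵢ'qᵢ' = 0; (5) qᵢpᵢ + qᵢ'qᵢ = 0; (6) qᵢpᵢ' + qᵢ'² = 1. -/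

import Mathlib

open scoped BigOperators

/-- Triples `(θ, a, b)` encoding maps `ℝⁿ → ℝ^{2n+1}`. -/
abbrev TripleMap (n : ℕ) :=
  ((Fin n → ℝ) → Fin n → ℝ) × ((Fin n → ℝ) → ℝ) × ((Fin n → ℝ) → Fin n → ℝ)

/-- All three components are `C^∞`. -/
def SmoothTriple (n : ℕ) (Φ : TripleMap n) : Prop :=
  ContDiff ℝ (⊤ : ℕ∞) Φ.1 ∧ ContDiff ℝ (⊤ : ℕ∞) Φ.2.1 ∧ ContDiff ℝ (⊤ : ℕ∞) Φ.2.2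

/-- The creative condition (*): `da = ∑ᵢ bᵢ dθᵢ`. -/
def Creative (n : ℕ) (Φ : TripleMap n) : Prop :=
  ∀ x v : Fin n → ℝ,
    fderiv ℝ Φ.2.1 x v = ∑ i, Φ.2.2 x i * fderiv ℝ (fun y => Φ.1 y i) x v

/-- `RegPts f` is the set of regular points of `f : ℝⁿ → ℝⁿ`, i.e. points where
the differential is invertible. -/
def RegPts (n : ℕ) (f : (Fin n → ℝ) → Fin n → ℝ) : Set (Fin n → ℝ) :=
  {x | Function.Bijective (fderiv ℝ f x)}

/-- `X`: smooth triples satisfying the creative condition. -/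
def Xset (n : ℕ) : Set (TripleMap n) := {Φ | SmoothTriple n Φ ∧ Creative n Φ}

/-- `GX`: elements of `X` such that `Reg θ` and `Reg b` are dense. -/
def GXset (n : ℕ) : Set (TripleMap n) :=
  {Φ | SmoothTriple n Φ ∧ Creative n Φ ∧ Dense (RegPts n Φ.1) ∧ Dense (RegPts n Φ.2.2)}

/-- `Y`: triples of the form `(θ, ½∑θᵢ², θ)` with `θ` smooth. -/
def Yset (n : ℕ) : Set (TripleMap n) :=
  {Φ | ∃ θ : (Fin n → ℝ) → Fin n → ℝ, ContDiff ℝ (⊤ : ℕ∞) θ ∧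
    Φ = (θ, fun x => (1 / 2) * ∑ i, θ x i ^ 2, θ)}

/-- `GY`: triples of the form `(θ, ½∑θᵢ², θ)` with `θ` smooth and `Reg θ` dense. -/
def GYset (n : ℕ) : Set (TripleMap n) :=
  {Φ | ∃ θ : (Fin n → ℝ) → Fin n → ℝ, ContDiff ℝ (⊤ : ℕ∞) θ ∧ Dense (RegPts n θ) ∧
    Φ = (θ, fun x => (1 / 2) * ∑ i, θ x i ^ 2, θ)}

/-- The Legendre involution `L(θ, a, b) = (b, ∑ᵢ bᵢθᵢ − a, θ)`. -/
def Legendre (n : ℕ) (Φ : TripleMap n) : TripleMap n :=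
  (Φ.2.2, fun x => (∑ i, Φ.2.2 x i * Φ.1 x i) - Φ.2.1 x, Φ.1)

/-- Packing a triple `(θ, a, b)` into a single map `ℝⁿ → ℝ^{2n+1}`
(realized as `ℝⁿ × ℝ × ℝⁿ`). -/
def packTriple (n : ℕ) (Φ : TripleMap n) : (Fin n → ℝ) → (Fin n → ℝ) × ℝ × (Fin n → ℝ) :=
  fun x => (Φ.1 x, Φ.2.1 x, Φ.2.2 x)

/-- Unpacking a map `ℝⁿ → ℝ^{2n+1}` into a triple `(θ, a, b)`. -/
def unpackTriple (n : ℕ) (Ψ : (Fin n → ℝ) → (Fin n → ℝ) × ℝ × (Fin n → ℝ)) : TripleMap n :=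
  (fun x => (Ψ x).1, fun x => (Ψ x).2.1, fun x => (Ψ x).2.2)

/-!
Through every point of `ℝ^{2n+1}` passes a triple of `GX`, and through every point
`(u, ½∑uᵢ², u)` one that lies in `GY` as well. Hence `F` itself is an involution of `ℝ^{2n+1}`
that fixes the points `(u, ½∑uᵢ², u)`. On the `i`-th coordinate pair `(Xᵢ, Zᵢ)` it acts by the
matrix with rows `(pᵢ, pᵢ')` and `(qᵢ, qᵢ')`, which therefore squares to the identity and
fixes `(1, 1)`.
-/

section CoefficientEquations

variable {ι R : Type*} [Semiring R] {F : (ι → R) × R × (ι → R) → (ι → R) × R × (ι → R)}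
  {i : ι} {p p' q q' : R}

lemma coeff_eqs_of_involutive (hF : Function.Involutive F)
    (hF1 : ∀ w, (F w).1 i = p * w.1 i + p' * w.2.2 i)
    (hF3 : ∀ w, (F w).2.2 i = q * w.1 i + q' * w.2.2 i) :
    p ^ 2 + p' * q = 1 ∧ p * p' + p' * q' = 0 ∧ q * p + q' * q = 0 ∧ q * p' + q' ^ 2 = 1 := by
  have hX (w : (ι → R) × R × (ι → R)) :
      p * (p * w.1 i + p' * w.2.2 i) + p' * (q * w.1 i + q' * w.2.2 i) = w.1 i := by
    rw [← hF1, ← hF3, ← hF1, hF]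
  have hZ (w : (ι → R) × R × (ι → R)) :
      q * (p * w.1 i + p' * w.2.2 i) + q' * (q * w.1 i + q' * w.2.2 i) = w.2.2 i := by
    rw [← hF1, ← hF3, ← hF3, hF]
  exact ⟨by simpa [sq] using hX (1, 0, 0), by simpa using hX (0, 0, 1),
    by simpa using hZ (1, 0, 0), by simpa [sq] using hZ (0, 0, 1)⟩

lemma coeff_sums_of_isFixedPt_one {y : R} (hF : Function.IsFixedPt F (1, y, 1))
    (hF1 : ∀ w, (F w).1 i = p * w.1 i + p' * w.2.2 i)
    (hF3 : ∀ w, (F w).2.2 i = q * w.1 i + q' * w.2.2 i) :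
    p + p' = 1 ∧ q + q' = 1 := by
  have hX := hF1 (1, y, 1)
  have hZ := hF3 (1, y, 1)
  rw [hF.eq] at hX hZ
  exact ⟨by simpa using hX.symm, by simpa using hZ.symm⟩

end CoefficientEquations

section TripleThrough

variable {n : ℕ}

lemma regPts_const_add (u : Fin n → ℝ) : RegPts n (fun x => u + x) = Set.univ := by
  refine Set.eq_univ_of_forall fun x => ?_
  have hderiv : fderiv ℝ (fun y => u + y) x = ContinuousLinearMap.id ℝ (Fin n → ℝ) := by
    rw [fderiv_const_add, fderiv_fun_id]
  rw [RegPts, Set.mem_ofPred_eq, hderiv]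
  exact Function.bijective_id

/-- The triple `(u + x, s + ∑ᵢ (wᵢxᵢ + xᵢ²/2), w + x)`, which takes the value `z = (u, s, w)` at
`x = 0`. It shows that every point of `ℝ^{2n+1}` is attained by an element of `GX`. -/
noncomputable def tripleThrough (z : (Fin n → ℝ) × ℝ × (Fin n → ℝ)) : TripleMap n :=
  (fun x => z.1 + x, fun x => z.2.1 + ∑ i, (z.2.2 i * x i + x i ^ 2 / 2), fun x => z.2.2 + x)

lemma packTriple_tripleThrough_zero (z : (Fin n → ℝ) × ℝ × (Fin n → ℝ)) :
    packTriple n (tripleThrough z) 0 = z := by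
  simp [packTriple, tripleThrough]

lemma smoothTriple_tripleThrough (z : (Fin n → ℝ) × ℝ × (Fin n → ℝ)) :
    SmoothTriple n (tripleThrough z) := by
  refine ⟨?_, ?_, ?_⟩ <;> dsimp only [tripleThrough] <;> fun_prop

lemma creative_tripleThrough (z : (Fin n → ℝ) × ℝ × (Fin n → ℝ)) :
    Creative n (tripleThrough z) := by
  intro x v
  have hproj (i : Fin n) : HasFDerivAt (fun y : Fin n → ℝ => y i)
      (ContinuousLinearMap.proj (R := ℝ) (φ := fun _ => ℝ) i) x := hasFDerivAt_apply i x
  have hθ (i : Fin n) : fderiv ℝ (fun y => (tripleThrough z).1 y i) x v = v i := by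
    simp [tripleThrough, (hproj i).fderiv]
  have ha : HasFDerivAt (tripleThrough z).2.1
      (∑ i, (z.2.2 i + x i) • ContinuousLinearMap.proj (R := ℝ) (φ := fun _ => ℝ) i) x := by
    refine (HasFDerivAt.fun_sum fun i _ => ?_).const_add z.2.1
    refine (((hproj i).const_mul (z.2.2 i)).add
      (((hproj i).pow 2).mul_const (2 : ℝ)⁻¹)).congr_fderiv ?_
    rw [add_smul, smul_smul]
    congr 2
    simp
  simp only [ha.fderiv, hθ]
  simp [tripleThrough]

lemma tripleThrough_mem_GXset (z : (Fin n → ℝ) × ℝ × (Fin n → ℝ)) :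
    tripleThrough z ∈ GXset n := by
  refine ⟨smoothTriple_tripleThrough z, creative_tripleThrough z, ?_, ?_⟩ <;>
    simp only [tripleThrough, regPts_const_add, dense_univ]

lemma tripleThrough_mem_GYset (u : Fin n → ℝ) :
    tripleThrough (u, (1 / 2) * ∑ i, u i ^ 2, u) ∈ GYset n := by
  refine ⟨fun x => u + x, by fun_prop, by simp only [regPts_const_add, dense_univ], ?_⟩
  simp only [tripleThrough, Prod.mk.injEq, true_and, and_true]
  funext x
  simp only [Finset.mul_sum, ← Finset.sum_add_distrib, Pi.add_apply]
  exact Finset.sum_congr rfl fun i _ => by ring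

end TripleThrough

section InducedMap

variable {n : ℕ}

lemma packTriple_unpackTriple (Ψ : (Fin n → ℝ) → (Fin n → ℝ) × ℝ × (Fin n → ℝ)) :
    packTriple n (unpackTriple n Ψ) = Ψ :=
  rfl

variable {F : (Fin n → ℝ) × ℝ × (Fin n → ℝ) → (Fin n → ℝ) × ℝ × (Fin n → ℝ)}
  {T : TripleMap n → TripleMap n}

lemma involutive_of_involutive_on_GXset
    (hTF : ∀ Φ ∈ GXset n, T Φ = unpackTriple n (F ∘ packTriple n Φ))
    (hmap : ∀ Φ ∈ GXset n, T Φ ∈ GXset n) (hinv : ∀ Φ ∈ GXset n, T (T Φ) = Φ) :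
    Function.Involutive F := by
  intro z
  have hΦ := tripleThrough_mem_GXset z
  calc F (F z) = F (F (packTriple n (tripleThrough z) 0)) := by
        rw [packTriple_tripleThrough_zero]
    _ = packTriple n (T (T (tripleThrough z))) 0 := by
        rw [hTF _ (hmap _ hΦ), hTF _ hΦ]
        simp only [packTriple_unpackTriple, Function.comp_apply]
    _ = z := by rw [hinv _ hΦ, packTriple_tripleThrough_zero]

lemma isFixedPt_of_fixes_GYset
    (hTF : ∀ Φ ∈ GXset n, T Φ = unpackTriple n (F ∘ packTriple n Φ))
    (hfix : ∀ Φ ∈ GXset n, Φ ∈ GYset n → T Φ = Φ) (u : Fin n → ℝ) :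
    Function.IsFixedPt F (u, (1 / 2) * ∑ i, u i ^ 2, u) := by
  have hΦ := tripleThrough_mem_GXset (u, (1 / 2) * ∑ i, u i ^ 2, u)
  have h := congrArg (fun Φ => packTriple n Φ 0) (hTF _ hΦ)
  simp only [hfix _ hΦ (tripleThrough_mem_GYset u), packTriple_unpackTriple, Function.comp_apply,
    packTriple_tripleThrough_zero] at h
  exact h.symm

theorem lemma_3_2_general
    (hTF : ∀ Φ ∈ GXset n, T Φ = unpackTriple n (F ∘ packTriple n Φ))
    (hmap : ∀ Φ ∈ GXset n, T Φ ∈ GXset n) (hinv : ∀ Φ ∈ GXset n, T (T Φ) = Φ)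
    (hfix : ∀ Φ ∈ GXset n, Φ ∈ GYset n → T Φ = Φ) {i : Fin n} {p p' q q' : ℝ}
    (hF1 : ∀ w, (F w).1 i = p * w.1 i + p' * w.2.2 i)
    (hF3 : ∀ w, (F w).2.2 i = q * w.1 i + q' * w.2.2 i) :
    p + p' = 1 ∧ q + q' = 1 ∧ p ^ 2 + p' * q = 1 ∧ p * p' + p' * q' = 0 ∧
      q * p + q' * q = 0 ∧ q * p' + q' ^ 2 = 1 := by
  have hinvol := involutive_of_involutive_on_GXset hTF hmap hinv
  obtain ⟨hp, hq⟩ :=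
    coeff_sums_of_isFixedPt_one (isFixedPt_of_fixes_GYset hTF hfix 1) hF1 hF3
  exact ⟨hp, hq, coeff_eqs_of_involutive hinvol hF1 hF3⟩

end InducedMap

/-- **Lemma 3.2**: under the assumptions of Lemma 3.1, if
`F₁ᵢ(X, Y, Z) = pᵢXᵢ + pᵢ'Zᵢ` and `F₃ᵢ(X, Y, Z) = qᵢXᵢ + qᵢ'Zᵢ`, then for every `i`
the six equations
(1) `pᵢ + pᵢ' = 1`, (2) `qᵢ + qᵢ' = 1`, (3) `pᵢ² + pᵢ'qᵢ = 1`, (4) `pᵢpᵢ' + pᵢ'qᵢ' = 0`,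
(5) `qᵢpᵢ + qᵢ'qᵢ = 0`, (6) `qᵢpᵢ' + qᵢ'² = 1` hold. -/
theorem lemma_3_2 (n : ℕ) (hn : 1 ≤ n)
    (F : (Fin n → ℝ) × ℝ × (Fin n → ℝ) → (Fin n → ℝ) × ℝ × (Fin n → ℝ))
    (hF : AnalyticOnNhd ℝ F Set.univ)
    (T : TripleMap n → TripleMap n)
    (hTF : ∀ Φ ∈ GXset n, T Φ = unpackTriple n (F ∘ packTriple n Φ))
    (hmap : ∀ Φ ∈ GXset n, T Φ ∈ GXset n)
    (hinv : ∀ Φ ∈ GXset n, T (T Φ) = Φ)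
    (hfix : ∀ Φ ∈ GXset n, (Φ ∈ GYset n → T Φ = Φ) ∧ (Φ ∉ GYset n → T Φ ≠ Φ))
    (p p' q q' : Fin n → ℝ)
    (hF1 : ∀ i : Fin n, ∀ w : (Fin n → ℝ) × ℝ × (Fin n → ℝ),
      (F w).1 i = p i * w.1 i + p' i * w.2.2 i)
    (hF3 : ∀ i : Fin n, ∀ w : (Fin n → ℝ) × ℝ × (Fin n → ℝ),
      (F w).2.2 i = q i * w.1 i + q' i * w.2.2 i) :
    ∀ i : Fin n,
      p i + p' i = 1 ∧
      q i + q' i = 1 ∧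
      (p i) ^ 2 + p' i * q i = 1 ∧
      p i * p' i + p' i * q' i = 0 ∧
      q i * p i + q' i * q i = 0 ∧
      q i * p' i + (q' i) ^ 2 = 1 :=
  fun i => lemma_3_2_general hTF hmap hinv (fun Φ hΦ => (hfix Φ hΦ).1) (hF1 i) (hF3 i)
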